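/- Let G be a connected Lie group and let X be a smooth vector field on G (a C^∞ section g ↦ X g ∈ T_g G of the tangent bundle) which is multiplicative, meaning that for all g, h ∈ G one has X(g·h) = T_{(g,h)}m (X g, X h), where T_{(g,h)}m denotes the differential (mfderiv) at (g, h) of the multiplication map m : G × G → G, under the identification T_{(g,h)}(G × G) ≅ T_g G × T_h G. Then X is complete: for every g₀ ∈ G there exists γ : ℝ → G with γ(0) = g₀ which is a global integral curve of X, i.e. for every t ∈ ℝ the derivative of γ at t equals X(γ(t)). -/

import Mathlib

open scoped Topology Manifold ContDiff
open Set

section UniformLocal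

variable
  {E : Type*} [NormedAddCommGroup E] [NormedSpace ℝ E]
  {H : Type*} [TopologicalSpace H] {I : ModelWithCorners ℝ E H}
  {M : Type*} [TopologicalSpace M] [ChartedSpace H M]

/-- A solution in a chart gives an integral curve on the manifold. -/
theorem mvf_chart_curve [IsManifold I 1 M] {v : (x : M) → TangentSpace I x} (x₀ : M)
    (f : ℝ → E) (t : ℝ)
    (hf3 : f t ∈ interior (extChartAt I x₀).target)
    (h : HasDerivAt f (tangentCoordChange I ((extChartAt I x₀).symm (f t)) x₀
      ((extChartAt I x₀).symm (f t)) (v ((extChartAt I x₀).symm (f t)))) t) :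
    HasMFDerivAt 𝓘(ℝ, ℝ) I ((extChartAt I x₀).symm ∘ f) t
      ((1 : ℝ →L[ℝ] ℝ).smulRight (v (((extChartAt I x₀).symm ∘ f) t))) := by
  let xₜ : M := (extChartAt I x₀).symm (f t)
  have hf3' := mem_of_mem_of_subset hf3 interior_subset
  have hft1 : xₜ ∈ (extChartAt I x₀).source := (extChartAt I x₀).map_target hf3'
  have hft2 := mem_extChartAt_source (I := I) xₜ
  have key : HasDerivAt ((extChartAt I xₜ ∘ (extChartAt I x₀).symm) ∘ f) (v xₜ) t := by
    have e : ∀ w : E, w = tangentCoordChange I x₀ xₜ xₜ (tangentCoordChange I xₜ x₀ xₜ w) := by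
      intro w
      rw [tangentCoordChange_comp ⟨⟨hft2, hft1⟩, hft2⟩, tangentCoordChange_self hft2]
    refine HasDerivAt.congr_deriv ?_ (e (v xₜ)).symm
    refine HasFDerivAt.comp_hasDerivAt _ ?_ h
    apply HasFDerivWithinAt.hasFDerivAt (s := range I) _ <|
      mem_nhds_iff.mpr ⟨interior (extChartAt I x₀).target,
        subset_trans interior_subset (extChartAt_target_subset_range ..),
        isOpen_interior, hf3⟩
    have := hasFDerivWithinAt_tangentCoordChange (I := I) (x := x₀) (y := xₜ) (z := xₜ) ⟨hft1, hft2⟩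
    rwa [(extChartAt I x₀).right_inv hf3'] at this
  have key2 : HasFDerivWithinAt (writtenInExtChartAt 𝓘(ℝ, ℝ) I t ((extChartAt I x₀).symm ∘ f))
      ((1 : ℝ →L[ℝ] ℝ).smulRight (v xₜ : E)) (range 𝓘(ℝ, ℝ)) (extChartAt 𝓘(ℝ, ℝ) t t) := by
    have := key.hasFDerivAt.hasFDerivWithinAt (s := univ)
    simp only [mfld_simps]
    convert! this using 1
  exact ⟨(continuousAt_extChartAt_symm'' hf3').comp h.continuousAt, key2⟩

/-- Uniform local existence. -/
theorem mvf_uniform_local [CompleteSpace E] [IsManifold I 1 M] {v : (x : M) → TangentSpace I x}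
    {x₀ : M} (hv : ContMDiffAt I I.tangent 1 (fun x ↦ (⟨x, v x⟩ : TangentBundle I M)) x₀)
    (hx : I.IsInteriorPoint x₀) :
    ∃ ε > (0 : ℝ), ∀ᶠ x in 𝓝 x₀, ∃ γ : ℝ → M, γ 0 = x ∧
      IsMIntegralCurveOn γ v (Ioo (-ε) ε) := by
  rw [contMDiffAt_iff] at hv
  obtain ⟨_, hv⟩ := hv
  have hv2 := (hv.contDiffAt (range_mem_nhds_isInteriorPoint hx)).snd
  obtain ⟨ε, hε, a, r, _, _, hr, hpl⟩ := IsPicardLindelof.of_contDiffAt_one hv2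
  obtain ⟨α, hα, hc⟩ :=
    (hpl 0).exists_forall_mem_closedBall_eq_hasDerivWithinAt_continuousOn
  set p := extChartAt I x₀ x₀ with hp
  have hr' : (0:ℝ) < r := hr
  have hcp : ContinuousAt α (p, 0) := by
    refine hc.continuousAt (prod_mem_nhds (Metric.closedBall_mem_nhds _ hr') (Icc_mem_nhds ?_ ?_))
      <;> linarith
  have hα0 : α (p, 0) = p := (hα p (Metric.mem_closedBall_self hr'.le)).1
  have hn : ∀ᶠ q in 𝓝 (p, (0:ℝ)), α q ∈ interior (extChartAt I x₀).target := by
    apply hcp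
    rw [hα0]
    exact isOpen_interior.mem_nhds ((I.isInteriorPoint_iff).mp hx)
  rw [nhds_prod_eq, Filter.eventually_prod_iff] at hn
  obtain ⟨P, hP, Q, hQ, hPQ⟩ := hn
  obtain ⟨δ, hδ, hQ⟩ := Metric.eventually_nhds_iff_ball.mp hQ
  refine ⟨min ε δ, lt_min hε hδ, ?_⟩
  have hca := continuousAt_extChartAt (I := I) x₀
  filter_upwards [hca.eventually hP, hca.eventually (Metric.closedBall_mem_nhds _ hr'),
    extChartAt_source_mem_nhds (I := I) x₀] with x h1 h2 h3
  refine ⟨(extChartAt I x₀).symm ∘ fun t => α (extChartAt I x₀ x, t), ?_, fun t ht => ?_⟩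
  · have := (hα _ h2).1
    simp only [Function.comp_apply]
    rw [this, PartialEquiv.left_inv _ h3]
  · apply HasMFDerivAt.hasMFDerivWithinAt
    have ht1 : t ∈ Ioo (-ε) ε := ⟨by linarith [ht.1, min_le_left ε δ], by linarith [ht.2, min_le_left ε δ]⟩
    have ht2 : t ∈ Metric.ball (0:ℝ) δ := by
      rw [Real.ball_eq_Ioo]
      exact ⟨by linarith [ht.1, min_le_right ε δ], by linarith [ht.2, min_le_right ε δ]⟩
    apply mvf_chart_curve x₀ _ t (hPQ h1 (hQ t ht2))
    have := ((hα _ h2).2 t ⟨by linarith [ht1.1], by linarith [ht1.2]⟩).hasDerivAt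
      (Icc_mem_nhds (by linarith [ht1.1]) (by linarith [ht1.2]))
    exact this

end UniformLocal

section Group

variable
  {E : Type*} [NormedAddCommGroup E] [NormedSpace ℝ E]
  {H : Type*} [TopologicalSpace H] {I : ModelWithCorners ℝ E H}
  {G : Type*} [TopologicalSpace G] [ChartedSpace H G] [Group G]

/-- A Lie group has no boundary. -/
theorem mvf_boundaryless [LieGroup I 1 G] : BoundarylessManifold I G := by
  have : IsManifold I 1 G := inferInstance
  have hex : ∃ z : G, I.IsInteriorPoint z := by
    obtain ⟨y, hy⟩ := interior_extChartAt_target_nonempty I (1 : G)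
    have hy' := interior_subset hy
    refine ⟨(extChartAt I (1 : G)).symm y, ?_⟩
    have hs := (extChartAt I (1 : G)).map_target hy'
    rw [I.isInteriorPoint_iff_of_mem_atlas (n := 1) one_ne_zero (chart_mem_atlas H (1 : G))
      (by rwa [extChartAt_source] at hs)]
    change (extChartAt I (1 : G)) _ ∈ interior (extChartAt I (1 : G)).target
    rwa [(extChartAt I (1 : G)).right_inv hy']
  obtain ⟨z, hz⟩ := hex
  refine ⟨fun x => ?_⟩
  let Φ : G ≃ₘ^1⟮I, I⟯ G :=
    { toEquiv := Equiv.mulLeft (x * z⁻¹)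
      contMDiff_toFun := contMDiff_mul_left
      contMDiff_invFun := by
        change ContMDiff I I 1 (fun y => (x * z⁻¹)⁻¹ * y)
        exact contMDiff_mul_left }
  have := ((Φ.isLocalDiffeomorph z).isInteriorPoint_iff one_ne_zero).1 hz
  have e : Φ z = x := by
    change x * z⁻¹ * z = x
    simp
  rwa [e] at this

theorem mvf_mul_curve [LieGroup I 1 G] (X : (g : G) → TangentSpace I g)
    (hmult : ∀ g h : G,
      X (g * h) = mfderiv (I.prod I) I (fun p : G × G => p.1 * p.2) (g, h)
        ((X g, X h) : TangentSpace (I.prod I) (g, h)))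
    {γ η : ℝ → G} {s : Set ℝ} (hs : IsOpen s)
    (hγ : IsMIntegralCurveOn γ X s) (hη : IsMIntegralCurveOn η X s) :
    IsMIntegralCurveOn (fun t => γ t * η t) X s := by
  intro t ht
  apply HasMFDerivAt.hasMFDerivWithinAt
  have h1 := (hγ t ht).hasMFDerivAt (hs.mem_nhds ht)
  have h2 := (hη t ht).hasMFDerivAt (hs.mem_nhds ht)
  have hm : MDifferentiableAt (I.prod I) I (fun p : G × G => p.1 * p.2) (γ t, η t) :=
    (contMDiff_mul I 1).mdifferentiableAt one_ne_zero
  have h3 := HasMFDerivAt.comp t hm.hasMFDerivAt (h1.prodMk h2)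
  have e : (mfderiv (I.prod I) I (fun p : G × G => p.1 * p.2) (γ t, η t)).comp
      (((1 : ℝ →L[ℝ] ℝ).smulRight (X (γ t))).prod ((1 : ℝ →L[ℝ] ℝ).smulRight (X (η t)))) =
      (1 : ℝ →L[ℝ] ℝ).smulRight (X (γ t * η t)) := by
    rw [hmult]
    apply ContinuousLinearMap.ext
    intro c
    exact ((mfderiv (I.prod I) I (fun p : G × G => p.1 * p.2) (γ t, η t)).map_smul c
      ((X (γ t), X (η t)) : TangentSpace (I.prod I) (γ t, η t)))
  exact e ▸ h3

end Group

theorem multiplicative_vector_field_complete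
    {E : Type*} [NormedAddCommGroup E] [NormedSpace ℝ E] [FiniteDimensional ℝ E]
    {H : Type*} [TopologicalSpace H] {I : ModelWithCorners ℝ E H}
    {G : Type*} [TopologicalSpace G] [ChartedSpace H G] [Group G]
    [LieGroup I (⊤ : ℕ∞) G] [ConnectedSpace G]
    (X : (g : G) → TangentSpace I g)
    (hX : ContMDiff I I.tangent (⊤ : ℕ∞) (fun g : G => (⟨g, X g⟩ : TangentBundle I G)))
    (hmult : ∀ g h : G,
      X (g * h) = mfderiv (I.prod I) I (fun p : G × G => p.1 * p.2) (g, h)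
        ((X g, X h) : TangentSpace (I.prod I) (g, h))) :
    ∀ g₀ : G, ∃ γ : ℝ → G, γ 0 = g₀ ∧ IsMIntegralCurve γ X := by
  have hle : (1 : WithTop ℕ∞) ≤ ((⊤ : ℕ∞) : WithTop ℕ∞) := by exact_mod_cast le_top
  have : LieGroup I 1 G := LieGroup.of_le hle
  have : IsTopologicalGroup G := topologicalGroup_of_lieGroup I 1
  have : T1Space G := I.t1Space G
  have : T2Space G := inferInstance
  have : BoundarylessManifold I G := mvf_boundaryless
  have : CompleteSpace E := FiniteDimensional.complete ℝ E
  have hX1 := hX.of_le hle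
  obtain ⟨ε, hε, hloc⟩ := mvf_uniform_local (v := X) (hX1 (1 : G))
    BoundarylessManifold.isInteriorPoint
  refine exists_isMIntegralCurve_of_isMIntegralCurveOn hX1 hε ?_
  let S : Set G := {x | ∃ γ : ℝ → G, γ 0 = x ∧ IsMIntegralCurveOn γ X (Ioo (-ε) ε)}
  have hS : S ∈ 𝓝 (1 : G) := hloc
  have hmulS : ∀ {a b : G}, a ∈ S → b ∈ S → a * b ∈ S := by
    rintro a b ⟨γ, h1, h2⟩ ⟨η, h3, h4⟩
    exact ⟨fun t => γ t * η t, by simp only [h1, h3], mvf_mul_curve X hmult isOpen_Ioo h2 h4⟩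
  let T : Subgroup G :=
    { carrier := {x | x ∈ S ∧ x⁻¹ ∈ S}
      mul_mem' := by
        rintro a b ⟨h1, h2⟩ ⟨h3, h4⟩
        exact ⟨hmulS h1 h3, by rw [mul_inv_rev]; exact hmulS h4 h2⟩
      one_mem' := by
        have := mem_of_mem_nhds hS
        exact ⟨this, by rwa [inv_one]⟩
      inv_mem' := by
        rintro a ⟨h1, h2⟩
        exact ⟨h2, by rwa [inv_inv]⟩ }
  have hT : (T : Set G) ∈ 𝓝 (1 : G) := by
    have hi : ∀ᶠ x in 𝓝 (1 : G), x⁻¹ ∈ S :=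
      (continuous_inv.tendsto' (1 : G) 1 inv_one).eventually hS
    exact Filter.inter_mem hS hi
  have hTo : IsOpen (T : Set G) := T.isOpen_of_mem_nhds hT
  have hTu : (T : Set G) = univ :=
    IsClopen.eq_univ ⟨T.isClosed_of_isOpen hTo, hTo⟩ ⟨1, T.one_mem⟩
  intro x
  have hx : x ∈ (T : Set G) := hTu ▸ mem_univ x
  exact hx.1
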